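/- arXiv:1808.01268 — 2 statements merged into one kernel-verified Lean document; each statement's English description precedes it below -/
import Mathlib

section
/- Let (R_i, R_j) be a pair of adjacent classes of G5 (that is, (R₁,R₂) or (R₃,R₄)); each element of R_j commutes with exactly one element of R_i. Let t₁ ∈ R_i and t₃ ∈ R_j be non-commuting. Then the Hurwitz orbit of the pair (t₁, t₃) has exactly four elements; exactly four distinct reflections appear as entries of pairs in this orbit, namely t₁, t₂ ∈ R_i and t₃, t₄ ∈ R_j; and R_i = {t₁, t₂, s₃, s₄}, where s₃ (respectively s₄) is the unique element of R_i commuting with t₃ (respectively t₄). -/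
noncomputable section

open Matrix Complex

/-- The `i`-th Hurwitz move on length-`k` tuples of group elements. -/
def IsHurwitzMove {G : Type*} [Group G] {k : ℕ} (t t' : Fin k → G) : Prop :=
  ∃ i : ℕ, ∃ h : i + 1 < k,
    t' ⟨i, Nat.lt_of_succ_lt h⟩ = t ⟨i + 1, h⟩ ∧
    t' ⟨i + 1, h⟩ = (t ⟨i + 1, h⟩)⁻¹ * t ⟨i, Nat.lt_of_succ_lt h⟩ * t ⟨i + 1, h⟩ ∧
    ∀ j : Fin k, (j : ℕ) ≠ i → (j : ℕ) ≠ i + 1 → t' j = t j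

/-- Two tuples lie in the same Hurwitz orbit. -/
def SameHurwitzOrbit {G : Type*} [Group G] {k : ℕ} (t t' : Fin k → G) : Prop :=
  Relation.EqvGen IsHurwitzMove t t'

/-- A group element `r` appears (as an entry) in the Hurwitz orbit of the tuple `t`. -/
def Appears {G : Type*} [Group G] {k : ℕ} (r : G) (t : Fin k → G) : Prop :=
  ∃ s : Fin k → G, SameHurwitzOrbit t s ∧ ∃ j, s j = r

/-- A tuple has two consecutive equal entries. -/
def HasConsecutiveEqualPair {G : Type*} [Group G] {k : ℕ} (t : Fin k → G) : Prop :=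
  ∃ i : ℕ, ∃ h : i + 1 < k, t ⟨i, Nat.lt_of_succ_lt h⟩ = t ⟨i + 1, h⟩

/-- Replace the `p`-th entry of a tuple by two consecutive copies of its square. -/
def doubleAt {G : Type*} [Group G] {m : ℕ} (t : Fin m → G) (p : Fin m) : Fin (m + 1) → G :=
  fun j =>
    if h1 : (j : ℕ) < (p : ℕ) then t ⟨j, h1.trans p.isLt⟩
    else if h2 : (j : ℕ) ≤ (p : ℕ) + 1 then (t p) ^ 2
    else t ⟨(j : ℕ) - 1, by have := j.isLt; omega⟩

/-- `ω = e^(2πi/3)`. -/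
def ω : ℂ := Complex.exp (2 * Real.pi * Complex.I / 3)

def AMat : Matrix (Fin 2) (Fin 2) ℂ := !![1, 0; 0, ω]

def BMat : Matrix (Fin 2) (Fin 2) ℂ :=
  !![(ω - ω ^ 2) / 3, ω ^ 2; (-2 * ω ^ 2) / 3, (-ω - 2 * ω ^ 2) / 3]

/-- The complex reflection group G₄ as the subgroup of GL(2,ℂ) generated by `AMat`, `BMat`. -/
def G4 : Subgroup (GL (Fin 2) ℂ) :=
  Subgroup.closure {g : GL (Fin 2) ℂ |
    (g : Matrix (Fin 2) (Fin 2) ℂ) = AMat ∨ (g : Matrix (Fin 2) (Fin 2) ℂ) = BMat}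

/-- The matrix underlying an element of G₄. -/
def mat (t : G4) : Matrix (Fin 2) (Fin 2) ℂ := ((t : GL (Fin 2) ℂ) : Matrix (Fin 2) (Fin 2) ℂ)

/-- A reflection in G₄: a non-identity element with eigenvalue 1. -/
def IsReflection (t : G4) : Prop := t ≠ 1 ∧ (mat t - 1).det = 0

/-- The conjugacy class R₁ of reflections of determinant ω. -/
def R1 : Set G4 := {t | IsReflection t ∧ (mat t).det = ω}

/-- The conjugacy class R₂ of reflections of determinant ω². -/
def R2 : Set G4 := {t | IsReflection t ∧ (mat t).det = ω ^ 2}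

/-- A Coxeter element of G₄: an element with a primitive 6th root of unity as eigenvalue. -/
def IsCoxeter (c : G4) : Prop :=
  ∃ ζ : ℂ, IsPrimitiveRoot ζ 6 ∧ (mat c - ζ • (1 : Matrix (Fin 2) (Fin 2) ℂ)).det = 0

/-- The relators of G₅: a³, b³, abab(baba)⁻¹. -/
def g5Rels : Set (FreeGroup (Fin 2)) :=
  {FreeGroup.of 0 ^ 3, FreeGroup.of 1 ^ 3,
    FreeGroup.of 0 * FreeGroup.of 1 * FreeGroup.of 0 * FreeGroup.of 1 *
      (FreeGroup.of 1 * FreeGroup.of 0 * FreeGroup.of 1 * FreeGroup.of 0)⁻¹}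

/-- The complex reflection group G₅, by its presentation ⟨a,b | a³ = b³ = 1, abab = baba⟩. -/
abbrev G5 := PresentedGroup g5Rels

def ga : G5 := PresentedGroup.of 0
def gb : G5 := PresentedGroup.of 1

/-- The conjugacy class of `a` in G₅. -/
def S1 : Set G5 := {t | IsConj ga t}
/-- The conjugacy class of `b` in G₅. -/
def S2 : Set G5 := {t | IsConj gb t}
/-- The conjugacy class of `a²` in G₅. -/
def S3 : Set G5 := {t | IsConj (ga ^ 2) t}
/-- The conjugacy class of `b²` in G₅. -/
def S4 : Set G5 := {t | IsConj (gb ^ 2) t}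

/-- A reflection in G₅: a conjugate of a, b, a², or b². -/
def IsReflection5 (t : G5) : Prop := t ∈ S1 ∨ t ∈ S2 ∨ t ∈ S3 ∨ t ∈ S4

/-- A Coxeter element of G₅: an element of order 12. -/
def IsCoxeter5 (c : G5) : Prop := orderOf c = 12

/-!
Let `x³ = y³ = 1` and `xyxy = yxyx`, with `x` and `y` generating the group. A Hurwitz move
preserves the product of a pair, and since `xyxy` is central the moves starting at `(x, y)` close
up after four steps, with entries `x`, `y`, `y⁻¹xy`, `xyx⁻¹`. The conjugate `s = x(y⁻¹xy)x⁻¹` of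
`x` satisfies `sy = (xyxy)²`, hence commutes with `y`, and the class of `x` is `{x, y⁻¹xy, s,
yxy⁻¹}`: conjugation by `x` fixes `x`, conjugation by `y` fixes `s`, and each permutes the other
three elements.

The conjugates of `x` other than `s` are conjugates by powers of `y`, so every non-commuting pair of
a conjugate of `x` and a conjugate of `y` is simultaneously conjugate to `(x, y)`. Hence `(t₁, t₃)`
satisfies the same relations as the generators, and everything can be read off from it; that the
elements involved are distinct follows from `t₁` and `t₃` not commuting.
-/

variable {G : Type*} [Group G]

section SameCycle

variable {α : Type*} {f : Equiv.Perm α} {a b : α}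

lemma eqvGen_apply_eq_iff_sameCycle :
    Relation.EqvGen (fun a b => f a = b) a b ↔ f.SameCycle a b := by
  constructor
  · intro h
    induction h with
    | rel a b hab => exact ⟨1, by simpa using hab⟩
    | refl a => exact .refl f a
    | symm _ _ _ ih => exact ih.symm
    | trans _ _ _ _ _ ih ih' => exact ih.trans ih'
  · rintro ⟨n, rfl⟩
    induction n with
    | zero => exact .refl a
    | succ n ih =>
      refine ih.trans _ _ _ (.rel _ _ ?_)
      rw [← Equiv.Perm.mul_apply, ← _root_.zpow_one_add, add_comm]
    | pred n ih =>
      refine ih.trans _ _ _ (.symm _ _ (.rel _ _ ?_))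
      rw [← Equiv.Perm.mul_apply, ← _root_.zpow_one_add, add_sub_cancel]

lemma sameCycle_iff_exists_fin_pow_apply_eq {n : ℕ} [NeZero n] (ha : (f ^ n) a = a) :
    f.SameCycle a b ↔ ∃ k : Fin n, (f ^ (k : ℕ)) a = b := by
  refine ⟨?_, fun ⟨k, hk⟩ => ⟨k, by simpa using hk⟩⟩
  rintro ⟨i, rfl⟩
  have hn : (0 : ℤ) < n := by exact_mod_cast NeZero.pos n
  lift i % n to ℕ using Int.emod_nonneg i hn.ne' with k hk
  have hkn : k < n := by have := Int.emod_lt_of_pos i hn; omega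
  refine ⟨⟨k, hkn⟩, ?_⟩
  rw [← Int.emod_add_mul_ediv i n, ← hk, _root_.zpow_add, _root_.zpow_mul, Equiv.Perm.mul_apply,
    zpow_natCast, zpow_natCast, Equiv.Perm.zpow_apply_eq_self_of_apply_eq_self ha]

end SameCycle

section HurwitzPair

/-- The Hurwitz move on pairs `(u, v) ↦ (v, v⁻¹uv)`, as a permutation of the set of pairs; pairs are
functions on `Fin 2` to agree with `IsHurwitzMove`. -/
def hurwitzPerm : Equiv.Perm (Fin 2 → G) where
  toFun t := ![t 1, (t 1)⁻¹ * t 0 * t 1]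
  invFun t := ![t 0 * t 1 * (t 0)⁻¹, t 0]
  left_inv t := by ext i; fin_cases i <;> simp [mul_assoc]
  right_inv t := by ext i; fin_cases i <;> simp [mul_assoc]

lemma hurwitzPerm_pair {u v w : G} (h : u * v = v * w) : hurwitzPerm ![u, v] = ![v, w] := by
  ext i
  fin_cases i <;> simp [hurwitzPerm, mul_assoc, h]

lemma isHurwitzMove_iff_hurwitzPerm_apply_eq {t t' : Fin 2 → G} :
    IsHurwitzMove t t' ↔ hurwitzPerm t = t' := by
  constructor
  · rintro ⟨i, hi, h_zero, h_one, -⟩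
    obtain rfl : i = 0 := by omega
    ext j
    fin_cases j
    · exact h_zero.symm
    · exact h_one.symm
  · rintro rfl
    exact ⟨0, one_lt_two, rfl, rfl, fun j hj hj' => by omega⟩

lemma sameHurwitzOrbit_iff_sameCycle {t s : Fin 2 → G} :
    SameHurwitzOrbit t s ↔ hurwitzPerm.SameCycle t s := by
  have isHurwitzMove_eq : IsHurwitzMove = fun t t' : Fin 2 → G => hurwitzPerm t = t' :=
    funext₂ fun _ _ => propext isHurwitzMove_iff_hurwitzPerm_apply_eq
  rw [SameHurwitzOrbit, isHurwitzMove_eq, eqvGen_apply_eq_iff_sameCycle]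

variable {x y : G}

lemma inv_conj_mul_conj_eq (braid : x * y * x * y = y * x * y * x) :
    y⁻¹ * x * y * (x * y * x⁻¹) = x * y := by
  calc y⁻¹ * x * y * (x * y * x⁻¹) = y⁻¹ * (x * y * x * y) * x⁻¹ := by group
    _ = y⁻¹ * (y * x * y * x) * x⁻¹ := by rw [braid]
    _ = x * y := by group

lemma setOf_sameHurwitzOrbit_eq (braid : x * y * x * y = y * x * y * x) :
    {s | SameHurwitzOrbit ![x, y] s} =
      {![x, y], ![y, y⁻¹ * x * y], ![y⁻¹ * x * y, x * y * x⁻¹], ![x * y * x⁻¹, x]} := by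
  have move₁ : hurwitzPerm ![x, y] = ![y, y⁻¹ * x * y] := hurwitzPerm_pair (by group)
  have move₂ : hurwitzPerm ![y, y⁻¹ * x * y] = ![y⁻¹ * x * y, x * y * x⁻¹] :=
    hurwitzPerm_pair (by rw [inv_conj_mul_conj_eq braid]; group)
  have move₃ : hurwitzPerm ![y⁻¹ * x * y, x * y * x⁻¹] = ![x * y * x⁻¹, x] :=
    hurwitzPerm_pair (by rw [inv_conj_mul_conj_eq braid]; group)
  have move₄ : hurwitzPerm ![x * y * x⁻¹, x] = ![x, y] := hurwitzPerm_pair (by group)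
  have period : (hurwitzPerm ^ 4) ![x, y] = ![x, y] := by
    simp only [pow_succ', pow_zero, mul_one, Equiv.Perm.mul_apply, move₁, move₂, move₃, move₄]
  ext s
  rw [Set.mem_ofPred_eq, sameHurwitzOrbit_iff_sameCycle,
    sameCycle_iff_exists_fin_pow_apply_eq period]
  simp [Fin.exists_fin_succ, pow_succ', move₁, move₂, move₃, eq_comm (b := s)]

lemma setOf_appears_eq (braid : x * y * x * y = y * x * y * x) :
    {r | Appears r ![x, y]} = {x, y⁻¹ * x * y, y, x * y * x⁻¹} := by
  ext r
  have orbit (s : Fin 2 → G) := Set.ext_iff.1 (setOf_sameHurwitzOrbit_eq braid) s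
  simp only [Set.mem_ofPred_eq, Set.mem_insert_iff, Set.mem_singleton_iff] at orbit ⊢
  simp only [Appears, orbit, or_and_right, exists_or, exists_eq_left, Fin.exists_fin_two,
    cons_val_zero, cons_val_one, eq_comm (b := r)]
  tauto

lemma ncard_setOf_appears_eq_four (braid : x * y * x * y = y * x * y * x) (hxy : ¬ Commute x y) :
    {r | Appears r ![x, y]}.ncard = 4 := by
  have hne : x ≠ y := by rintro rfl; exact hxy (.refl x)
  refine Set.ncard_eq_four.2 ⟨_, _, _, _, ?_, hne, ?_, ?_, ?_, ?_, setOf_appears_eq braid⟩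
  · intro h
    exact hxy (by rwa [eq_comm, mul_assoc, inv_mul_eq_iff_eq_mul] at h)
  · intro h
    exact hne (by simpa [eq_mul_inv_iff_mul_eq] using h)
  · intro h
    exact hne (by simpa [mul_assoc, inv_mul_eq_iff_eq_mul] using h)
  · intro h
    have short_braid : x * y * x = y * x * y := by
      rwa [eq_mul_inv_iff_mul_eq, mul_assoc, mul_assoc, inv_mul_eq_iff_eq_mul, ← mul_assoc,
        ← mul_assoc] at h
    rw [← short_braid] at braid
    exact hne (mul_left_cancel braid).symm
  · intro h
    exact hxy (mul_inv_eq_iff_eq_mul.1 h.symm)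

lemma ncard_setOf_sameHurwitzOrbit_eq_four (braid : x * y * x * y = y * x * y * x)
    (hxy : ¬ Commute x y) : {s | SameHurwitzOrbit ![x, y] s}.ncard = 4 := by
  -- The pairs in the orbit all have product `x * y`, so each is determined by its first entry.
  have orbit_eq_image : {s | SameHurwitzOrbit ![x, y] s} =
      Set.image (fun r => ![r, r⁻¹ * (x * y)]) {r | Appears r ![x, y]} := by
    simp only [setOf_appears_eq braid, Set.image_insert_eq, Set.image_singleton,
      inv_mul_cancel_left, inv_mul_eq_of_eq_mul (inv_conj_mul_conj_eq braid).symm,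
      inv_mul_eq_of_eq_mul (inv_mul_cancel_right (x * y) x).symm, ← mul_assoc y⁻¹ x y]
    rw [setOf_sameHurwitzOrbit_eq braid, Set.insert_comm ![y, _]]
  rw [orbit_eq_image, Set.ncard_image_of_injective, ncard_setOf_appears_eq_four braid hxy]
  exact fun r₁ r₂ h => congrFun h 0

end HurwitzPair

open scoped Pointwise in
lemma conjugatesOf_subset_of_forall_conj_smul_eq {T S : Set G} {x : G}
    (hT : Subgroup.closure T = ⊤) (hS : ∀ g ∈ T, MulAut.conj g • S = S) (hx : x ∈ S) :
    conjugatesOf x ⊆ S := by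
  intro t ht
  obtain ⟨g, rfl⟩ := isConj_iff.1 ht
  have closure_le : Subgroup.closure T ≤ (MulAction.stabilizer (MulAut G) S).comap MulAut.conj :=
    (Subgroup.closure_le _).2 hS
  have hg : MulAut.conj g • S = S := closure_le (hT ▸ Subgroup.mem_top g)
  exact hg ▸ Set.smul_mem_smul_set hx

lemma closure_conj_pair_eq_top {x y : G} (hgen : Subgroup.closure {x, y} = ⊤) (g : G) :
    Subgroup.closure {g * x * g⁻¹, g * y * g⁻¹} = ⊤ := by
  have map_top : (Subgroup.closure {x, y}).map (MulAut.conj g).toMonoidHom = ⊤ := by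
    rw [hgen, Subgroup.map_top_of_surjective _ (MulAut.conj g).surjective]
  simpa [MonoidHom.map_closure, Set.image_pair] using map_top

/-- The pair `(x, y)` satisfies the defining relations of `G5`, in any group; stated so as to apply
to the generators, to their squares and to simultaneous conjugates of either pair. -/
structure IsG5Pair (x y : G) : Prop where
  left_cube : x ^ 3 = 1
  right_cube : y ^ 3 = 1
  braid : x * y * x * y = y * x * y * x

/-- The conjugate `x(y⁻¹xy)x⁻¹` of `x`, which commutes with `y` when `(x, y)` is a `G5`-pair. -/
def commutingConj (x y : G) : G := x * (y⁻¹ * x * y) * x⁻¹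

namespace IsG5Pair

variable {a b x y t u : G}

lemma conj (h : IsG5Pair x y) (g : G) : IsG5Pair (g * x * g⁻¹) (g * y * g⁻¹) where
  left_cube := by rw [conj_pow, h.left_cube, mul_one, mul_inv_cancel]
  right_cube := by rw [conj_pow, h.right_cube, mul_one, mul_inv_cancel]
  braid := by simp only [conj_mul, h.braid]

lemma inv_left (h : IsG5Pair x y) : x⁻¹ = x ^ 2 :=
  inv_eq_of_mul_eq_one_right (by rw [← pow_succ', h.left_cube])

lemma inv_right (h : IsG5Pair x y) : y⁻¹ = y ^ 2 :=
  inv_eq_of_mul_eq_one_right (by rw [← pow_succ', h.right_cube])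

lemma sq (h : IsG5Pair x y) : IsG5Pair (x ^ 2) (y ^ 2) := by
  rw [← h.inv_left, ← h.inv_right]
  exact ⟨by rw [inv_pow, h.left_cube, inv_one], by rw [inv_pow, h.right_cube, inv_one],
    by simpa [mul_assoc] using congrArg (·⁻¹) h.braid.symm⟩

lemma closure_sq_eq_top (h : IsG5Pair x y) (hgen : Subgroup.closure {x, y} = ⊤) :
    Subgroup.closure {x ^ 2, y ^ 2} = ⊤ := by
  rw [← h.inv_left, ← h.inv_right]
  simpa [Set.inv_insert] using (Subgroup.closure_inv {x, y}).trans hgen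

lemma commutingConj_mul (h : IsG5Pair x y) : commutingConj x y * y = (x * y * x * y) ^ 2 := by
  calc commutingConj x y * y = x * y⁻¹ * x * y * x⁻¹ * y := by rw [commutingConj]; group
    _ = x * y * (y * x * y * x) * x * y := by
        rw [h.inv_left, h.inv_right]; simp only [pow_two, mul_assoc]
    _ = x * y * (x * y * x * y) * x * y := by rw [h.braid]
    _ = (x * y * x * y) ^ 2 := by simp only [pow_two, mul_assoc]

lemma commute_commutingConj (h : IsG5Pair x y) : Commute (commutingConj x y) y := by
  have commute_braid : Commute (x * y * x * y) y := by
    rw [commute_iff_eq]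
    nth_rw 1 [h.braid]
    simp only [mul_assoc]
  rw [eq_mul_inv_of_mul_eq h.commutingConj_mul]
  exact (commute_braid.pow_left 2).mul_left (Commute.refl y).inv_left

lemma conj_left_conj_right_eq (h : IsG5Pair x y) : x * (y * x * y⁻¹) * x⁻¹ = y⁻¹ * x * y := by
  calc x * (y * x * y⁻¹) * x⁻¹ = y⁻¹ * (y * x * y * x) * y⁻¹ * x⁻¹ := by group
    _ = y⁻¹ * (x * y * x * y) * y⁻¹ * x⁻¹ := by rw [h.braid]
    _ = y⁻¹ * x * y := by group

lemma conj_commutingConj (h : IsG5Pair x y) : x * commutingConj x y * x⁻¹ = y * x * y⁻¹ := by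
  calc x * commutingConj x y * x⁻¹ = x ^ 2 * (y⁻¹ * x * y) * (x ^ 2)⁻¹ := by
        simp only [commutingConj, pow_two, mul_assoc, _root_.mul_inv_rev]
    _ = x⁻¹ * y⁻¹ * (x * y * x * y) * y⁻¹ := by rw [← h.inv_left]; group
    _ = x⁻¹ * y⁻¹ * (y * x * y * x) * y⁻¹ := by rw [h.braid]
    _ = y * x * y⁻¹ := by group

lemma conj_right_conj_right_eq (h : IsG5Pair x y) :
    y * (y * x * y⁻¹) * y⁻¹ = y⁻¹ * x * y := by
  calc y * (y * x * y⁻¹) * y⁻¹ = y ^ 2 * x * (y ^ 2)⁻¹ := by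
        simp only [pow_two, mul_assoc, _root_.mul_inv_rev]
    _ = y⁻¹ * x * y := by rw [← h.inv_right, inv_inv]

open scoped Pointwise in
lemma conjugatesOf_left_eq (h : IsG5Pair x y) (hgen : Subgroup.closure {x, y} = ⊤) :
    conjugatesOf x = {x, y⁻¹ * x * y, commutingConj x y, y * x * y⁻¹} := by
  apply subset_antisymm
  · refine conjugatesOf_subset_of_forall_conj_smul_eq hgen ?_ (Set.mem_insert _ _)
    have conj_left : x * (y⁻¹ * x * y) * x⁻¹ = commutingConj x y := rfl
    have conj_right : y * commutingConj x y * y⁻¹ = commutingConj x y :=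
      mul_inv_eq_of_eq_mul h.commute_commutingConj.eq.symm
    have conj_inv_conj : y * (y⁻¹ * x * y) * y⁻¹ = x := by group
    rintro g (rfl | rfl)
    · simp only [Set.smul_set_insert, Set.smul_set_singleton, MulAut.smul_def, MulAut.conj_apply,
        mul_inv_cancel_right, conj_left, h.conj_commutingConj, h.conj_left_conj_right_eq]
      ext t
      simp only [Set.mem_insert_iff, Set.mem_singleton_iff]
      tauto
    · simp only [Set.smul_set_insert, Set.smul_set_singleton, MulAut.smul_def, MulAut.conj_apply,
        conj_inv_conj, conj_right, h.conj_right_conj_right_eq]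
      ext t
      simp only [Set.mem_insert_iff, Set.mem_singleton_iff]
      tauto
  · rintro t (rfl | rfl | rfl | rfl)
    · exact mem_conjugatesOf_self
    · exact isConj_iff.2 ⟨y⁻¹, by rw [inv_inv]⟩
    · exact isConj_iff.2 ⟨x * y⁻¹, by rw [commutingConj]; group⟩
    · exact isConj_iff.2 ⟨y, rfl⟩

lemma commute_right_iff_eq_commutingConj (h : IsG5Pair x y) (hgen : Subgroup.closure {x, y} = ⊤)
    (hxy : ¬ Commute x y) (ht : t ∈ conjugatesOf x) : Commute t y ↔ t = commutingConj x y := by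
  refine ⟨fun hty => ?_, fun ht => ht ▸ h.commute_commutingConj⟩
  rw [h.conjugatesOf_left_eq hgen] at ht
  rcases ht with rfl | rfl | rfl | rfl
  · exact absurd hty hxy
  · exact absurd ((Commute.conj_iff y⁻¹).1 (by simpa using hty)) hxy
  · rfl
  · exact absurd ((Commute.conj_iff y).1 (by simpa using hty)) hxy

lemma exists_conj_eq_of_not_commute (h : IsG5Pair a b) (hgen : Subgroup.closure {a, b} = ⊤)
    (ht : t ∈ conjugatesOf a) (hu : u ∈ conjugatesOf b) (htu : ¬ Commute t u) :
    ∃ g, g * a * g⁻¹ = t ∧ g * b * g⁻¹ = u := by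
  obtain ⟨k, rfl⟩ := isConj_iff.1 hu
  obtain ⟨t', rfl⟩ : ∃ t', k * t' * k⁻¹ = t := ⟨k⁻¹ * t * k, by group⟩
  have ht' : t' ∈ conjugatesOf a := IsConj.trans ht (isConj_iff.2 ⟨k, rfl⟩).symm
  rw [Commute.conj_iff] at htu
  rw [h.conjugatesOf_left_eq hgen] at ht'
  rcases ht' with rfl | rfl | rfl | rfl
  · exact ⟨k, rfl, rfl⟩
  · exact ⟨k * b⁻¹, by group, by group⟩
  · exact absurd h.commute_commutingConj htu
  · exact ⟨k * b, by group, by group⟩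

lemma existsUnique_commute (h : IsG5Pair a b) (hgen : Subgroup.closure {a, b} = ⊤)
    (hab : ¬ Commute a b) (hu : u ∈ conjugatesOf b) : ∃! s, s ∈ conjugatesOf a ∧ Commute s u := by
  obtain ⟨g, rfl⟩ := isConj_iff.1 hu
  have h' := h.conj g
  have hgen' := closure_conj_pair_eq_top hgen g
  rw [(isConj_iff.2 ⟨g, rfl⟩ : IsConj a (g * a * g⁻¹)).conjugatesOf_eq]
  refine ⟨commutingConj (g * a * g⁻¹) (g * b * g⁻¹), ⟨?_, h'.commute_commutingConj⟩, fun s hs =>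
    (h'.commute_right_iff_eq_commutingConj hgen' (mt (Commute.conj_iff g).1 hab) hs.1).1 hs.2⟩
  rw [h'.conjugatesOf_left_eq hgen']
  simp

end IsG5Pair

lemma isG5Pair_ga_gb : IsG5Pair ga gb where
  left_cube := PresentedGroup.one_of_mem (x := FreeGroup.of 0 ^ 3) (by simp [g5Rels])
  right_cube := PresentedGroup.one_of_mem (x := FreeGroup.of 1 ^ 3) (by simp [g5Rels])
  braid := PresentedGroup.mk_eq_mk_of_mul_inv_mem
    (x := FreeGroup.of 0 * FreeGroup.of 1 * FreeGroup.of 0 * FreeGroup.of 1)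
    (y := FreeGroup.of 1 * FreeGroup.of 0 * FreeGroup.of 1 * FreeGroup.of 0) (by simp [g5Rels])

lemma closure_ga_gb_eq_top : Subgroup.closure {ga, gb} = ⊤ := by
  rw [← PresentedGroup.closure_range_of]
  congr 1
  ext x
  simp [Fin.exists_fin_two, ga, gb, eq_comm]

theorem g5_adjacent_classes_pair_orbit_general {a b t₁ t₃ : G} (h : IsG5Pair a b)
    (hgen : Subgroup.closure {a, b} = ⊤) (h₁ : t₁ ∈ conjugatesOf a) (h₃ : t₃ ∈ conjugatesOf b)
    (hcomm : ¬ Commute t₁ t₃) :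
    (∀ u ∈ conjugatesOf b, ∃! s : G, s ∈ conjugatesOf a ∧ Commute s u) ∧
    {s : Fin 2 → G | SameHurwitzOrbit ![t₁, t₃] s}.ncard = 4 ∧
    ∃ t₂ t₄ s₃ s₄ : G, t₂ ∈ conjugatesOf a ∧ t₄ ∈ conjugatesOf b ∧
      {r : G | Appears r ![t₁, t₃]} = {t₁, t₂, t₃, t₄} ∧
      ({t₁, t₂, t₃, t₄} : Set G).ncard = 4 ∧
      s₃ ∈ conjugatesOf a ∧ Commute s₃ t₃ ∧ s₄ ∈ conjugatesOf a ∧ Commute s₄ t₄ ∧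
      conjugatesOf a = {t₁, t₂, s₃, s₄} := by
  obtain ⟨g, rfl, rfl⟩ := h.exists_conj_eq_of_not_commute hgen h₁ h₃ hcomm
  rw [IsConj.conjugatesOf_eq h₁, IsConj.conjugatesOf_eq h₃]
  replace hgen := closure_conj_pair_eq_top hgen g
  replace h := h.conj g
  generalize g * a * g⁻¹ = x, g * b * g⁻¹ = y at *
  have appears_eq := setOf_appears_eq h.braid
  have class_eq := h.conjugatesOf_left_eq hgen
  have commute_right : Commute (y * x * y⁻¹) (x * y * x⁻¹) := by
    rw [← h.conj_commutingConj, Commute.conj_iff]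
    exact h.commute_commutingConj
  exact ⟨fun u => h.existsUnique_commute hgen hcomm,
    ncard_setOf_sameHurwitzOrbit_eq_four h.braid hcomm, y⁻¹ * x * y, x * y * x⁻¹,
    commutingConj x y, y * x * y⁻¹, by simp [class_eq], isConj_iff.2 ⟨x, rfl⟩,
    appears_eq, appears_eq ▸ ncard_setOf_appears_eq_four h.braid hcomm, by simp [class_eq],
    h.commute_commutingConj, by simp [class_eq], commute_right, class_eq⟩

theorem g5_adjacent_classes_pair_orbit (Ri Rj : Set G5)
    (h : (Ri = S1 ∧ Rj = S2) ∨ (Ri = S3 ∧ Rj = S4))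
    (t₁ t₃ : G5) (h₁ : t₁ ∈ Ri) (h₃ : t₃ ∈ Rj) (hcomm : ¬ Commute t₁ t₃) :
    (∀ u ∈ Rj, ∃! s : G5, s ∈ Ri ∧ Commute s u) ∧
    {s : Fin 2 → G5 | SameHurwitzOrbit ![t₁, t₃] s}.ncard = 4 ∧
    ∃ t₂ t₄ s₃ s₄ : G5, t₂ ∈ Ri ∧ t₄ ∈ Rj ∧
      {r : G5 | Appears r ![t₁, t₃]} = {t₁, t₂, t₃, t₄} ∧
      ({t₁, t₂, t₃, t₄} : Set G5).ncard = 4 ∧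
      s₃ ∈ Ri ∧ Commute s₃ t₃ ∧ s₄ ∈ Ri ∧ Commute s₄ t₄ ∧
      Ri = {t₁, t₂, s₃, s₄} := by
  rcases h with ⟨rfl, rfl⟩ | ⟨rfl, rfl⟩
  · exact g5_adjacent_classes_pair_orbit_general isG5Pair_ga_gb closure_ga_gb_eq_top h₁ h₃ hcomm
  · exact g5_adjacent_classes_pair_orbit_general isG5Pair_ga_gb.sq
      (isG5Pair_ga_gb.closure_sq_eq_top closure_ga_gb_eq_top) h₁ h₃ hcomm
end
end

section
/- Every reflection factorization of a Coxeter element of G5 of length at least five satisfies at least one of the following: (1) at least four of its entries lie in a single conjugacy class; (2) at least three of its entries lie in a single conjugacy class (with at least two further entries in any combination of classes); (3) there are two distinct conjugacy classes each containing at least two of its entries, together with at least one entry from a third class. In particular, no length-five reflection factorization of a Coxeter element of G5 has conjugacy-class multiset consisting of two entries from one class and one entry from each of the other three classes. -/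
noncomputable section

open Matrix Complex

/-!
Under the abelianization `G₅ → (ℤ/3)²` a product of reflections with `nᵢ` factors in `Rᵢ` maps to
`(n₁ - n₃, n₂ - n₄)`. Both coordinates of the image of an element of order 12 are nonzero, so
`n₁ ≠ n₃` and `n₂ ≠ n₄`, and this alone forces the distribution.

For the coordinates, put `u = ab`, `v = ba`, `w = a⁻¹ba⁻¹`. These satisfy `u² = v² = w²` and
`uvw = 1`, so `z = u²` is central in `N = ⟨u, v, w⟩` and `uz`, `vz`, `wz` satisfy Hamilton's
relations `i² = j² = k² = ijk`; in particular `z⁶ = 1`. Conjugation by `a` permutes `u, v, w`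
cyclically, so `N` is normal with quotient generated by the image of `a`. Every `g` outside `N`
satisfies `g⁶ = 1`, while every `g` in `N` satisfies `g² = zᵐ` for some `m` such that `g` maps to
`(m, m)`. An element of order 12 therefore lies in `N`, and there `3 ∤ m` because `g⁴ ≠ 1`.
-/

section QuaternionTriple

variable {G : Type*} [Group G] {a u v w : G}

/-- Three elements with a common square and product `1`, such as `ab`, `ba`, `a⁻¹ba⁻¹` in `G₅`.
These relations present `Q₈ × ℤ/3`; with `z = u ^ 2`, the elements `uz`, `vz`, `wz` satisfy
Hamilton's relations `i² = j² = k² = ijk`. -/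
structure IsQuaternionTriple (u v w : G) : Prop where
  sq_eq_sq : u ^ 2 = v ^ 2
  sq_eq_sq' : v ^ 2 = w ^ 2
  mul_mul_eq_one : u * v * w = 1

namespace IsQuaternionTriple

theorem rotate (h : IsQuaternionTriple u v w) : IsQuaternionTriple v w u where
  sq_eq_sq := h.sq_eq_sq'
  sq_eq_sq' := (h.sq_eq_sq.trans h.sq_eq_sq').symm
  mul_mul_eq_one := mul_eq_one_comm.mp ((mul_assoc u v w).symm.trans h.mul_mul_eq_one)

theorem commute_sq_left (h : IsQuaternionTriple u v w) : Commute (u ^ 2) v := by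
  rw [h.sq_eq_sq]
  exact Commute.pow_self v 2

theorem commute_sq_right (h : IsQuaternionTriple u v w) : Commute (u ^ 2) w := by
  rw [h.sq_eq_sq]
  exact h.rotate.commute_sq_left

theorem mul_eq (h : IsQuaternionTriple u v w) : u * v = w * (u ^ 2) ^ (-1 : ℤ) := by
  rw [eq_inv_of_mul_eq_one_left h.mul_mul_eq_one, h.sq_eq_sq, h.sq_eq_sq']
  group

theorem mul_swap_eq (h : IsQuaternionTriple u v w) : v * u = w * (u ^ 2) ^ (2 : ℤ) :=
  calc v * u = v * u * (u * v * w) := by rw [h.mul_mul_eq_one, mul_one]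
    _ = v * (u ^ 2 * v) * w := by simp only [sq, mul_assoc]
    _ = v ^ 2 * (u ^ 2 * w) := by rw [h.commute_sq_left.eq]; simp only [sq, mul_assoc]
    _ = (u ^ 2) ^ 2 * w := by rw [← h.sq_eq_sq, ← mul_assoc, ← sq]
    _ = w * (u ^ 2) ^ (2 : ℤ) := by rw [(h.commute_sq_right.pow_left 2).eq, zpow_ofNat]

theorem mul_mul_reverse (h : IsQuaternionTriple u v w) : w * v * u = (u ^ 2) ^ 3 := by
  rw [h.rotate.mul_swap_eq, ← h.sq_eq_sq]
  group

theorem sq_pow_six (h : IsQuaternionTriple u v w) : (u ^ 2) ^ 6 = 1 := by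
  have vuv_two_ways : u * (u ^ 2) ^ (4 : ℤ) = u * (u ^ 2) ^ (-2 : ℤ) :=
    calc u * (u ^ 2) ^ (4 : ℤ) = w * v * (u ^ 2) ^ (2 : ℤ) := by
          rw [h.rotate.mul_swap_eq, ← h.sq_eq_sq]; group
      _ = v * u * v := by
          rw [h.mul_swap_eq, mul_assoc, mul_assoc, (h.commute_sq_left.zpow_left 2).eq]
      _ = v * w * (u ^ 2) ^ (-1 : ℤ) := by rw [mul_assoc, h.mul_eq, mul_assoc]
      _ = u * (u ^ 2) ^ (-2 : ℤ) := by rw [h.rotate.mul_eq, ← h.sq_eq_sq]; group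
  calc (u ^ 2) ^ 6 = (u ^ 2) ^ (4 : ℤ) * (u ^ 2) ^ (2 : ℤ) := by group
    _ = 1 := by rw [mul_left_cancel vuv_two_ways]; group

theorem commute_sq_of_mem (h : IsQuaternionTriple u v w) {q : G}
    (hq : q ∈ ({1, u, v, w} : Set G)) : Commute (u ^ 2) q := by
  rcases hq with rfl | rfl | rfl | rfl
  · exact Commute.one_right _
  · exact Commute.pow_self _ 2
  · exact h.commute_sq_left
  · exact h.commute_sq_right

theorem sq_eq_of_mem (h : IsQuaternionTriple u v w) {q : G} (hq : q ∈ ({u, v, w} : Set G)) :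
    q ^ 2 = u ^ 2 := by
  rcases hq with rfl | rfl | rfl
  · rfl
  · exact h.sq_eq_sq.symm
  · exact h.rotate.sq_eq_sq'

theorem exists_mul_eq_mul_zpow (h : IsQuaternionTriple u v w) {p q : G}
    (hp : p ∈ ({1, u, v, w} : Set G)) (hq : q ∈ ({u, v, w} : Set G)) :
    ∃ r ∈ ({1, u, v, w} : Set G), ∃ m : ℤ, p * q = r * (u ^ 2) ^ m := by
  by_cases hpq : p = q
  · exact ⟨1, by simp, 1, by rw [hpq, ← sq, h.sq_eq_of_mem hq]; simp⟩
  have hvw := h.rotate.mul_eq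
  have hwv := h.rotate.mul_swap_eq
  have hwu := h.rotate.rotate.mul_eq
  have huw := h.rotate.rotate.mul_swap_eq
  rw [← h.sq_eq_sq'] at hwu huw
  rw [← h.sq_eq_sq] at hvw hwv hwu huw
  rcases hp with rfl | rfl | rfl | rfl
  · exact ⟨q, Or.inr hq, 0, by simp⟩
  · rcases hq with rfl | rfl | rfl
    · exact absurd rfl hpq
    · exact ⟨w, by simp, -1, h.mul_eq⟩
    · exact ⟨v, by simp, 2, huw⟩
  · rcases hq with rfl | rfl | rfl
    · exact ⟨w, by simp, 2, h.mul_swap_eq⟩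
    · exact absurd rfl hpq
    · exact ⟨u, by simp, -1, hvw⟩
  · rcases hq with rfl | rfl | rfl
    · exact ⟨v, by simp, -1, hwu⟩
    · exact ⟨u, by simp, 2, hwv⟩
    · exact absurd rfl hpq

theorem exists_eq_mul_zpow_of_mem_closure (h : IsQuaternionTriple u v w) {g : G}
    (hg : g ∈ Subgroup.closure {u, v, w}) :
    ∃ q ∈ ({1, u, v, w} : Set G), ∃ m : ℤ, g = q * (u ^ 2) ^ m := by
  have mul_generator {p q : G} {m : ℤ} (hp : p ∈ ({1, u, v, w} : Set G))
      (hq : q ∈ ({u, v, w} : Set G)) :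
      ∃ r ∈ ({1, u, v, w} : Set G), ∃ n : ℤ, p * (u ^ 2) ^ m * q = r * (u ^ 2) ^ n := by
    obtain ⟨r, hr, n, hpq⟩ := h.exists_mul_eq_mul_zpow hp hq
    refine ⟨r, hr, n + m, ?_⟩
    rw [mul_assoc, ((h.commute_sq_of_mem (Or.inr hq)).zpow_left m).eq, ← mul_assoc, hpq, mul_assoc,
      _root_.zpow_add]
  induction hg using Subgroup.closure_induction_right with
  | one => exact ⟨1, by simp, 0, by simp⟩
  | mul_right _ _ q hq ih =>
    obtain ⟨p, hp, m, rfl⟩ := ih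
    exact mul_generator hp hq
  | mul_inv_cancel _ _ q hq ih =>
    obtain ⟨p, hp, m, rfl⟩ := ih
    obtain ⟨r, hr, n, hpq⟩ := mul_generator (m := m) hp hq
    refine ⟨r, hr, n - 1, ?_⟩
    have q_inv : q⁻¹ = q * (u ^ 2)⁻¹ := by rw [← h.sq_eq_of_mem hq]; group
    rw [q_inv, ← mul_assoc, hpq, mul_assoc, _root_.zpow_sub_one]

theorem exists_sq_eq_zpow_and_map_eq_zpow (h : IsQuaternionTriple u v w) {M : Type*} [CommGroup M]
    (φ : G →* M) (hv : φ v = φ u) (hw : φ w = φ u) {g : G}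
    (hg : g ∈ Subgroup.closure {u, v, w}) :
    ∃ m : ℤ, g ^ 2 = (u ^ 2) ^ m ∧ φ g = φ u ^ m := by
  obtain ⟨q, hq, n, rfl⟩ := h.exists_eq_mul_zpow_of_mem_closure hg
  rw [((h.commute_sq_of_mem hq).symm.zpow_right n).mul_pow, map_mul, map_zpow, map_pow]
  rcases hq with rfl | hq
  · exact ⟨2 * n, by group, by rw [map_one]; group⟩
  · have map_q : φ q = φ u := by
      rcases hq with rfl | rfl | rfl
      exacts [rfl, hv, hw]
    exact ⟨2 * n + 1, by rw [h.sq_eq_of_mem hq]; group, by rw [map_q]; group⟩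

theorem mul_pow_six_eq_one (h : IsQuaternionTriple u v w) (ha : a ^ 3 = 1)
    (hvu : SemiconjBy a v u) (hwv : SemiconjBy a w v) : (a * u) ^ 6 = 1 := by
  have cube_eq : (a * u) ^ 3 = w * v * u :=
    calc
      (a * u) ^ 3 = a * (u * a) * (u * a) * u := by
        simp only [pow_succ, pow_zero, one_mul, mul_assoc]
      _ = a * a * (v * a) * v * u := by rw [← hvu.eq]; group
      _ = a ^ 3 * w * v * u := by rw [← hwv.eq]; simp only [pow_succ, pow_zero, one_mul, mul_assoc]
      _ = w * v * u := by rw [ha, one_mul]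
  rw [show 6 = 3 * 2 from rfl, pow_mul, cube_eq, h.mul_mul_reverse, ← pow_mul]
  exact h.sq_pow_six

theorem mul_pow_six_eq_one_of_mem_closure (h : IsQuaternionTriple u v w) (ha : a ^ 3 = 1)
    (hvu : SemiconjBy a v u) (hwv : SemiconjBy a w v) (huw : SemiconjBy a u w) {g : G}
    (hg : g ∈ Subgroup.closure {u, v, w}) : (a * g) ^ 6 = 1 := by
  obtain ⟨q, hq, m, rfl⟩ := h.exists_eq_mul_zpow_of_mem_closure hg
  have commute_a : Commute a (u ^ 2) := by
    have := hvu.pow_right 2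
    rwa [← h.sq_eq_sq] at this
  have commute_aq : Commute (a * q) ((u ^ 2) ^ m) :=
    (commute_a.mul_left (h.commute_sq_of_mem hq).symm).zpow_right m
  have aq_pow_six : (a * q) ^ 6 = 1 := by
    rcases hq with rfl | rfl | rfl | rfl
    · rw [mul_one, show 6 = 3 * 2 from rfl, pow_mul, ha, one_pow]
    · exact h.mul_pow_six_eq_one ha hvu hwv
    · exact h.rotate.mul_pow_six_eq_one ha hwv huw
    · exact h.rotate.rotate.mul_pow_six_eq_one ha huw hvu
  rw [← mul_assoc, commute_aq.mul_pow, aq_pow_six, one_mul, ← zpow_natCast, zpow_comm,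
    zpow_natCast, h.sq_pow_six, _root_.one_zpow]

end IsQuaternionTriple

theorem mem_normalizer_closure_of_semiconjBy (hvu : SemiconjBy a v u) (hwv : SemiconjBy a w v)
    (huw : SemiconjBy a u w) :
    a ∈ Subgroup.normalizer (Subgroup.closure {u, v, w} : Set G) := by
  have conj_image : MulAut.conj a '' {u, v, w} = {u, v, w} := by
    simp only [Set.image_insert_eq, Set.image_singleton, MulAut.conj_apply, hvu.eq, hwv.eq, huw.eq,
      mul_inv_cancel_right]
    rw [Set.insert_comm, Set.pair_comm]
  rw [Subgroup.mem_normalizer_iff_map_conj_eq, MonoidHom.map_closure]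
  exact congrArg Subgroup.closure conj_image

end QuaternionTriple

section G5Relations

variable {G : Type*} [Group G] {a b : G}

/-- The defining relations of `G₅`, satisfied by a pair of elements of an arbitrary group. -/
structure IsG5Pair_s13 (a b : G) : Prop where
  pow_three_left : a ^ 3 = 1
  pow_three_right : b ^ 3 = 1
  braid : a * b * a * b = b * a * b * a

/-- For the generators of `G₅`, the normal subgroup `Q₈ × ℤ/3` of index 3, which is the kernel of
the character `a ↦ 1`, `b ↦ -1` to `ℤ/3` and contains all elements of order 12. -/
def quaternionCore (a b : G) : Subgroup G :=
  Subgroup.closure {a * b, b * a, a⁻¹ * b * a⁻¹}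

theorem mul_swap_mem_quaternionCore (a b : G) : b * a ∈ quaternionCore a b :=
  Subgroup.subset_closure (by simp)

theorem semiconjBy_mul_swap (a b : G) : SemiconjBy a (b * a) (a * b) :=
  (mul_assoc a b a).symm

theorem zpowers_sup_quaternionCore (hgen : Subgroup.closure {a, b} = ⊤) :
    Subgroup.zpowers a ⊔ quaternionCore a b = ⊤ := by
  have ha : a ∈ Subgroup.zpowers a ⊔ quaternionCore a b :=
    Subgroup.mem_sup_left (Subgroup.mem_zpowers a)
  have hb : b ∈ Subgroup.zpowers a ⊔ quaternionCore a b := by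
    simpa using mul_mem (Subgroup.mem_sup_right (mul_swap_mem_quaternionCore a b)) (inv_mem ha)
  rw [← top_le_iff, ← hgen, Subgroup.closure_le]
  rintro x (rfl | rfl)
  exacts [ha, hb]

namespace IsG5Pair_s13

theorem inv_eq_sq (h : IsG5Pair_s13 a b) : a⁻¹ = a ^ 2 :=
  inv_eq_of_mul_eq_one_left (by rw [← pow_succ, h.pow_three_left])

theorem semiconjBy_inv_mul_inv (h : IsG5Pair_s13 a b) : SemiconjBy a (a⁻¹ * b * a⁻¹) (b * a) := by
  rw [SemiconjBy, mul_assoc b, ← sq, ← h.inv_eq_sq]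
  group

theorem semiconjBy_mul (h : IsG5Pair_s13 a b) : SemiconjBy a (a * b) (a⁻¹ * b * a⁻¹) := by
  rw [SemiconjBy, ← mul_assoc, ← sq, ← h.inv_eq_sq]
  group

theorem isQuaternionTriple (h : IsG5Pair_s13 a b) :
    IsQuaternionTriple (a * b) (b * a) (a⁻¹ * b * a⁻¹) := by
  have sq_eq_sq : (a * b) ^ 2 = (b * a) ^ 2 := by simpa only [sq, mul_assoc] using h.braid
  have commute_sq : Commute a ((b * a) ^ 2) := by
    have := (semiconjBy_mul_swap a b).pow_right 2
    rwa [sq_eq_sq] at this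
  refine ⟨sq_eq_sq, ?_, ?_⟩
  · have := (h.semiconjBy_inv_mul_inv).pow_right 2
    exact mul_left_cancel (commute_sq.eq.trans this.eq.symm)
  · calc
      a * b * (b * a) * (a⁻¹ * b * a⁻¹) = a * b ^ 3 * a⁻¹ := by
        simp only [pow_succ, pow_zero, one_mul, mul_assoc, mul_inv_cancel_left]
      _ = 1 := by rw [h.pow_three_right]; group

theorem mul_pow_six_eq_one_of_mem_quaternionCore (h : IsG5Pair_s13 a b) {g : G}
    (hg : g ∈ quaternionCore a b) : (a * g) ^ 6 = 1 :=
  h.isQuaternionTriple.mul_pow_six_eq_one_of_mem_closure h.pow_three_left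
    (semiconjBy_mul_swap a b) h.semiconjBy_inv_mul_inv h.semiconjBy_mul hg

theorem mem_normalizer_quaternionCore (h : IsG5Pair_s13 a b) :
    a ∈ Subgroup.normalizer (quaternionCore a b : Set G) :=
  mem_normalizer_closure_of_semiconjBy (semiconjBy_mul_swap a b) h.semiconjBy_inv_mul_inv
    h.semiconjBy_mul

theorem quaternionCore_normal (h : IsG5Pair_s13 a b) (hgen : Subgroup.closure {a, b} = ⊤) :
    (quaternionCore a b).Normal := by
  have hb : b ∈ Subgroup.normalizer (quaternionCore a b : Set G) := by
    simpa using mul_mem (Subgroup.le_normalizer (mul_swap_mem_quaternionCore a b))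
      (inv_mem h.mem_normalizer_quaternionCore)
  rw [← Subgroup.normalizer_eq_top_iff, ← top_le_iff, ← hgen, Subgroup.closure_le]
  rintro x (rfl | rfl)
  exacts [h.mem_normalizer_quaternionCore, hb]

theorem pow_six_eq_one_of_notMem_quaternionCore (h : IsG5Pair_s13 a b)
    (hgen : Subgroup.closure {a, b} = ⊤) {g : G} (hg : g ∉ quaternionCore a b) : g ^ 6 = 1 := by
  have := h.quaternionCore_normal hgen
  have hg_sup : g ∈ Subgroup.zpowers a ⊔ quaternionCore a b := by
    rw [zpowers_sup_quaternionCore hgen]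
    exact Subgroup.mem_top g
  obtain ⟨_, ⟨e, rfl⟩, n, hn, rfl⟩ := Subgroup.mem_sup_of_normal_right.mp hg_sup
  have he : e % 3 = 0 ∨ e % 3 = 1 ∨ e % 3 = 2 := by lia
  have ha : a ^ e = a ^ (e % 3) :=
    zpow_eq_zpow_emod (n := 3) e (by rw [zpow_ofNat, h.pow_three_left])
  simp only [ha] at hg ⊢
  rcases he with he | he | he <;> rw [he] at hg ⊢
  · simp [hn] at hg
  · rw [zpow_one]
    exact h.mul_pow_six_eq_one_of_mem_quaternionCore hn
  · have hconj : a⁻¹ * n⁻¹ * a ∈ quaternionCore a b := by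
      simpa using this.conj_mem _ (inv_mem hn) a⁻¹
    have := h.mul_pow_six_eq_one_of_mem_quaternionCore hconj
    rw [← inv_eq_one, ← inv_pow, zpow_ofNat, ← h.inv_eq_sq]
    simpa [mul_assoc] using this

theorem exists_map_eq_zpow_of_pow_ne_one (h : IsG5Pair_s13 a b) (hgen : Subgroup.closure {a, b} = ⊤)
    {M : Type*} [CommGroup M] (φ : G →* M) {g : G} (h4 : g ^ 4 ≠ 1) (h6 : g ^ 6 ≠ 1) :
    ∃ m : ℤ, ¬ 3 ∣ m ∧ φ g = φ (a * b) ^ m := by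
  have hg : g ∈ quaternionCore a b := by
    contrapose! h6
    exact h.pow_six_eq_one_of_notMem_quaternionCore hgen h6
  have map_mul_swap : φ (b * a) = φ (a * b) := by rw [map_mul, map_mul, mul_comm]
  have map_third : φ (a⁻¹ * b * a⁻¹) = φ (a * b) := by
    have := congrArg φ h.semiconjBy_mul.eq
    rw [map_mul, map_mul φ (a⁻¹ * b * a⁻¹), mul_comm] at this
    exact (mul_right_cancel this).symm
  obtain ⟨m, hsq, hmap⟩ :=
    h.isQuaternionTriple.exists_sq_eq_zpow_and_map_eq_zpow φ map_mul_swap map_third hg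
  refine ⟨m, ?_, hmap⟩
  rintro ⟨l, rfl⟩
  apply h4
  calc g ^ 4 = (g ^ 2) ^ 2 := by rw [← pow_mul]
    _ = (((a * b) ^ 2) ^ 6) ^ l := by rw [hsq]; group
    _ = 1 := by rw [h.isQuaternionTriple.sq_pow_six, _root_.one_zpow]

end IsG5Pair_s13

end G5Relations

section ClassCounts

theorem sum_eq_sum_ncard_nsmul {ι κ A : Type*} [Fintype ι] [Fintype κ] [AddCommMonoid A]
    {C : κ → Set ι} (hC : ∀ i, ∃! j, i ∈ C j) {f : ι → A} {value : κ → A}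
    (hf : ∀ j, ∀ i ∈ C j, f i = value j) : ∑ i, f i = ∑ j, (C j).ncard • value j := by
  classical
  choose cls mem_cls cls_unique using hC
  have mem_iff (i j) : i ∈ C j ↔ cls i = j :=
    ⟨fun hi => (cls_unique i j hi).symm, fun hi => hi ▸ mem_cls i⟩
  have hcard (j) : (C j).ncard = (Finset.univ.filter (cls · = j)).card := by
    rw [← Set.ncard_coe_finset]
    congr 1
    ext i
    simp [mem_iff]
  calc ∑ i, f i = ∑ i, value (cls i) := Fintype.sum_congr _ _ fun i => hf _ i (mem_cls i)
    _ = ∑ j, ∑ i with cls i = j, value j := (Finset.sum_fiberwise' _ _ _).symm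
    _ = ∑ j, (C j).ncard • value j := by simp only [Finset.sum_const, hcard]

variable {n : Fin 4 → ℕ}

theorem exists_three_le_or_exists_two_le_two_le_one_le (hsum : 5 ≤ ∑ j, n j) (h02 : n 0 ≠ n 2)
    (h13 : n 1 ≠ n 3) :
    (∃ j, 3 ≤ n j) ∨
      ∃ i j l, i ≠ j ∧ i ≠ l ∧ j ≠ l ∧ 2 ≤ n i ∧ 2 ≤ n j ∧ 1 ≤ n l := by
  by_cases hlarge : ∃ j, 3 ≤ n j
  · exact Or.inl hlarge
  push Not at hlarge
  have h0 := hlarge 0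
  have h1 := hlarge 1
  have h2 := hlarge 2
  have h3 := hlarge 3
  have hsum' := Fin.sum_univ_four n
  obtain ⟨i, hi, hni⟩ : ∃ i, (i = 0 ∨ i = 2) ∧ 2 ≤ n i := by
    have : 2 ≤ n 0 ∨ 2 ≤ n 2 := by lia
    exact this.elim (⟨0, Or.inl rfl, ·⟩) (⟨2, Or.inr rfl, ·⟩)
  obtain ⟨j, hj, hnj⟩ : ∃ j, (j = 1 ∨ j = 3) ∧ 2 ≤ n j := by
    have : 2 ≤ n 1 ∨ 2 ≤ n 3 := by lia
    exact this.elim (⟨1, Or.inl rfl, ·⟩) (⟨3, Or.inr rfl, ·⟩)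
  have hij : i ≠ j := by lia
  obtain ⟨l, hil, hjl, hnl⟩ : ∃ l, i ≠ l ∧ j ≠ l ∧ 1 ≤ n l := by
    by_contra! hzero
    have := Fintype.sum_eq_add i j hij fun l hl => Nat.lt_one_iff.mp (hzero l hl.1.symm hl.2.symm)
    linarith [hlarge i, hlarge j]
  exact Or.inr ⟨i, j, l, hij, hil, hjl, hni, hnj, hnl⟩

theorem not_exists_eq_two_and_forall_eq_one (h02 : n 0 ≠ n 2) (h13 : n 1 ≠ n 3) :
    ¬ ∃ i, n i = 2 ∧ ∀ j, j ≠ i → n j = 1 := by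
  rintro ⟨i, -, hone⟩
  by_cases hi : i = 0 ∨ i = 2
  · exact h13 ((hone 1 (by lia)).trans (hone 3 (by lia)).symm)
  · exact h02 ((hone 0 (by lia)).trans (hone 2 (by lia)).symm)

end ClassCounts

section ReflectionClasses

theorem isG5Pair_ga_gb_s13 : IsG5Pair_s13 ga gb where
  pow_three_left := PresentedGroup.one_of_mem (rels := g5Rels) (Or.inl rfl)
  pow_three_right := PresentedGroup.one_of_mem (rels := g5Rels) (Or.inr (Or.inl rfl))
  braid := PresentedGroup.mk_eq_mk_of_mul_inv_mem (rels := g5Rels) (Or.inr (Or.inr rfl))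

theorem closure_ga_gb : Subgroup.closure {ga, gb} = (⊤ : Subgroup G5) := by
  rw [← PresentedGroup.closure_range_of g5Rels]
  congr 1
  ext x
  simp [Fin.exists_fin_two, ga, gb, eq_comm]

/-- The abelianization map `G₅ → (ℤ/3)²`, with `a ↦ (1, 0)` and `b ↦ (0, 1)`. -/
def g5Abelianization : G5 →* Multiplicative (ZMod 3 × ZMod 3) :=
  PresentedGroup.toGroup
    (f := ![Multiplicative.ofAdd (1, 0), Multiplicative.ofAdd (0, 1)]) (by
      rintro r (rfl | rfl | rfl) <;>
        simp only [map_pow, map_mul, map_inv, FreeGroup.lift_apply_of] <;> decide)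

theorem g5Abelianization_ga : g5Abelianization ga = Multiplicative.ofAdd (1, 0) :=
  PresentedGroup.toGroup.of _

theorem g5Abelianization_gb : g5Abelianization gb = Multiplicative.ofAdd (0, 1) :=
  PresentedGroup.toGroup.of _

theorem IsCoxeter5.g5Abelianization_ne_zero {c : G5} (hc : IsCoxeter5 c) :
    (g5Abelianization c).toAdd.1 ≠ 0 ∧ (g5Abelianization c).toAdd.2 ≠ 0 := by
  have pow_ne_one {d : ℕ} (hd : ¬ 12 ∣ d) : c ^ d ≠ 1 := by
    rwa [Ne, ← orderOf_dvd_iff_pow_eq_one, hc]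
  obtain ⟨m, hm, hmap⟩ := isG5Pair_ga_gb_s13.exists_map_eq_zpow_of_pow_ne_one closure_ga_gb
    g5Abelianization (pow_ne_one (d := 4) (by decide)) (pow_ne_one (d := 6) (by decide))
  have hm' : (m : ZMod 3) ≠ 0 := by rwa [Ne, ZMod.intCast_zmod_eq_zero_iff_dvd]
  rw [hmap, map_mul, g5Abelianization_ga, g5Abelianization_gb]
  simpa using hm'

/-- The conjugacy classes `R₁, …, R₄` of reflections, indexed from `0`; the classes of a reflection
and of its inverse have indices differing by `2`. -/
def reflectionClass : Fin 4 → Set G5 := ![S1, S2, S3, S4]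

/-- The common value of `g5Abelianization` on the elements of a reflection class. -/
def reflectionClassValue : Fin 4 → ZMod 3 × ZMod 3 := ![(1, 0), (0, 1), (-1, 0), (0, -1)]

theorem range_reflectionClass : Set.range reflectionClass = {S1, S2, S3, S4} := by
  simp only [reflectionClass, Matrix.range_cons, Matrix.range_empty, Set.union_empty,
    Set.singleton_union]

theorem reflectionClass_nonempty (j : Fin 4) : (reflectionClass j).Nonempty := by
  fin_cases j
  exacts [⟨ga, IsConj.refl _⟩, ⟨gb, IsConj.refl _⟩, ⟨ga ^ 2, IsConj.refl _⟩,
    ⟨gb ^ 2, IsConj.refl _⟩]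

theorem toAdd_g5Abelianization_of_mem {j : Fin 4} {r : G5} (hr : r ∈ reflectionClass j) :
    (g5Abelianization r).toAdd = reflectionClassValue j := by
  have map_eq {s : G5} (h : IsConj s r) : g5Abelianization r = g5Abelianization s :=
    (isConj_iff_eq.mp (g5Abelianization.map_isConj h)).symm
  fin_cases j <;> rw [map_eq hr] <;>
    simp only [map_pow, g5Abelianization_ga, g5Abelianization_gb] <;> decide

theorem eq_of_mem_reflectionClass {i j : Fin 4} {r : G5} (hi : r ∈ reflectionClass i)
    (hj : r ∈ reflectionClass j) : i = j := by
  have value_injective : Function.Injective reflectionClassValue := by decide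
  exact value_injective
    ((toAdd_g5Abelianization_of_mem hi).symm.trans (toAdd_g5Abelianization_of_mem hj))

theorem reflectionClass_injective : Function.Injective reflectionClass := by
  intro i j hij
  obtain ⟨r, hr⟩ := reflectionClass_nonempty i
  exact eq_of_mem_reflectionClass hr (hij ▸ hr)

theorem IsReflection5.existsUnique_mem_reflectionClass {r : G5} (hr : IsReflection5 r) :
    ∃! j, r ∈ reflectionClass j := by
  have hex : ∃ j, r ∈ reflectionClass j := by
    rcases hr with h | h | h | h
    exacts [⟨0, h⟩, ⟨1, h⟩, ⟨2, h⟩, ⟨3, h⟩]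
  obtain ⟨j, hj⟩ := hex
  exact ⟨j, hj, fun i hi => eq_of_mem_reflectionClass hi hj⟩

variable {k : ℕ} {t : Fin k → G5}

/-- The number of entries of a tuple in each of the four reflection classes. -/
def classCount (t : Fin k → G5) (j : Fin 4) : ℕ :=
  {i : Fin k | t i ∈ reflectionClass j}.ncard

theorem sum_classCount (ht : ∀ i, IsReflection5 (t i)) : ∑ j, classCount t j = k := by
  have hsum : ∑ _i : Fin k, 1 = ∑ j, classCount t j • 1 :=
    sum_eq_sum_ncard_nsmul (fun i => (ht i).existsUnique_mem_reflectionClass) fun _ _ _ => rfl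
  simpa using hsum.symm

theorem toAdd_g5Abelianization_prod (ht : ∀ i, IsReflection5 (t i)) :
    (g5Abelianization (List.ofFn t).prod).toAdd =
      ((classCount t 0 : ZMod 3) - classCount t 2, (classCount t 1 : ZMod 3) - classCount t 3) := by
  have hsum : ∑ i, (g5Abelianization (t i)).toAdd = ∑ j, classCount t j • reflectionClassValue j :=
    sum_eq_sum_ncard_nsmul (fun i => (ht i).existsUnique_mem_reflectionClass)
      fun _ _ => toAdd_g5Abelianization_of_mem
  rw [map_list_prod, List.map_ofFn, List.prod_ofFn, toAdd_prod]
  simp only [Function.comp_apply, hsum, Fin.sum_univ_four]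
  ext <;> simp [reflectionClassValue, sub_eq_add_neg]

theorem classCount_ne_of_isCoxeter5_prod (ht : ∀ i, IsReflection5 (t i))
    (hc : IsCoxeter5 (List.ofFn t).prod) :
    classCount t 0 ≠ classCount t 2 ∧ classCount t 1 ≠ classCount t 3 := by
  have hne := hc.g5Abelianization_ne_zero
  rw [toAdd_g5Abelianization_prod ht] at hne
  exact ⟨fun h => hne.1 (by simp [h]), fun h => hne.2 (by simp [h])⟩

end ReflectionClasses

theorem g5_class_distribution (k : ℕ) (hk : 5 ≤ k) (c : G5) (hc : IsCoxeter5 c)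
    (t : Fin k → G5) (ht : ∀ i, IsReflection5 (t i)) (hp : (List.ofFn t).prod = c) :
    ((∃ R ∈ ({S1, S2, S3, S4} : Set (Set G5)), 4 ≤ {i : Fin k | t i ∈ R}.ncard) ∨
     (∃ R ∈ ({S1, S2, S3, S4} : Set (Set G5)), 3 ≤ {i : Fin k | t i ∈ R}.ncard) ∨
     (∃ R ∈ ({S1, S2, S3, S4} : Set (Set G5)), ∃ R' ∈ ({S1, S2, S3, S4} : Set (Set G5)),
       ∃ R'' ∈ ({S1, S2, S3, S4} : Set (Set G5)), R ≠ R' ∧ R ≠ R'' ∧ R' ≠ R'' ∧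
       2 ≤ {i : Fin k | t i ∈ R}.ncard ∧ 2 ≤ {i : Fin k | t i ∈ R'}.ncard ∧
       1 ≤ {i : Fin k | t i ∈ R''}.ncard)) ∧
    (k = 5 → ¬ ∃ R ∈ ({S1, S2, S3, S4} : Set (Set G5)),
      {i : Fin k | t i ∈ R}.ncard = 2 ∧
      ∀ R' ∈ ({S1, S2, S3, S4} : Set (Set G5)), R' ≠ R →
        {i : Fin k | t i ∈ R'}.ncard = 1) := by
  subst hp
  obtain ⟨h02, h13⟩ := classCount_ne_of_isCoxeter5_prod ht hc
  rw [← sum_classCount ht] at hk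
  simp only [← range_reflectionClass, Set.exists_range_iff, Set.forall_mem_range,
    reflectionClass_injective.ne_iff]
  exact ⟨Or.inr (exists_three_le_or_exists_two_le_two_le_one_le hk h02 h13),
    fun _ => not_exists_eq_two_and_forall_eq_one h02 h13⟩
end
end
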